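/- Let N ≥ 3 and d ≥ 1 be integers. Suppose the regular N-gon admits a Hermitian psd lift of size d that is equivariant with respect to the rotation group Rot_N ≅ ℤ/Nℤ; i.e., suppose there exist: an ℝ-affine subspace L of the d×d complex matrices all of whose elements are Hermitian; an ℝ-linear map π from d×d complex Hermitian matrices to ℝ²; and a map ρ : ℤ/Nℤ → GL_d(ℂ) with ρ(g + g') = ρ(g)ρ(g') for all g, g'; such that: (1) conv(𝒳_N) = π({Y ∈ L : Y positive semidefinite}); (2) ρ(g) Y ρ(g)* ∈ L for all g ∈ ℤ/Nℤ and all Y ∈ L; and (3) π(ρ(g) Y ρ(g)*) = R_g · π(Y) for all g ∈ ℤ/Nℤ and all positive semidefinite Y ∈ L, where R_g is the rotation of ℝ² by angle 2πg/N and ρ(g)* is the conjugate transpose. Then d ≥ ln(N/2). -/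

import Mathlib

open Real Finset Matrix
open scoped ComplexOrder

/-!
Let `Y ∈ L` be psd and lie over the vertex at angle `π / N`. Average the orbit of `Y` with the
signed weights whose Fourier transform `φ` on `ℤ/Nℤ` is `k ↦ exp (iπk/N)` truncated to `|k| ≤ r`.
Since `φ 0 = 1` and `φ 1 = exp (iπ/N)`, the average `Z` stays in `L` and projects to the unit vector
at angle `2π/N`, which lies halfway between two adjacent vertices and hence outside the polygon. So
`Z` cannot be psd.

On the other hand `ρ` involves at most `d` frequencies, and `Z` is psd as soon as the kernel
`φ (k - k')` is psd on them. This holds if `3r < N` and being at distance at most `r` is a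
transitive relation on the frequencies: the kernel is then a direct sum of rank-one blocks. Growing
a spanning forest by one edge at every scale `2 ^ j` that fails transitivity shows that some
`r = 2 ^ j` with `j ≤ d - 1` works, so `N` is at most `3 * 2 ^ (d - 1)`.
-/

section ScaleSelection

variable {α : Type*} {w : Sym2 α → ℕ}

theorem weight_le_sum_map_edges (hself : ∀ x, w s(x, x) = 0)
    (htri : ∀ x y z, w s(x, z) ≤ w s(x, y) + w s(y, z)) {G : SimpleGraph α} {x y : α}
    (p : G.Walk x y) : w s(x, y) ≤ (p.edges.map w).sum := by
  induction p with
  | nil => simp [hself]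
  | cons h p ih => simpa using (htri _ _ _).trans (Nat.add_le_add_left ih _)

theorem weight_le_sum_edgeFinset_of_reachable (hself : ∀ x, w s(x, x) = 0)
    (htri : ∀ x y z, w s(x, z) ≤ w s(x, y) + w s(y, z)) {G : SimpleGraph α}
    [Fintype G.edgeSet] {x y : α} (h : G.Reachable x y) :
    w s(x, y) ≤ ∑ e ∈ G.edgeFinset, w e := by
  classical
  obtain ⟨p, hp⟩ := h.exists_isPath
  calc w s(x, y) ≤ (p.edges.map w).sum := weight_le_sum_map_edges hself htri p
    _ = ∑ e ∈ p.edges.toFinset, w e := (List.sum_toFinset w hp.edges_nodup).symm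
    _ ≤ ∑ e ∈ G.edgeFinset, w e :=
      sum_le_sum_of_subset fun e he => by
        simpa using p.edges_subset_edgeSet (List.mem_toFinset.1 he)

theorem card_edgeFinset_lt_card_of_isAcyclic [Fintype α] [Nonempty α] {G : SimpleGraph α}
    [Fintype G.edgeSet] (hG : G.IsAcyclic) : #G.edgeFinset < Fintype.card α := by
  classical
  obtain ⟨T, hGT, -, hT⟩ :=
    SimpleGraph.connected_top.exists_isTree_le_of_le_of_isAcyclic le_top hG
  rw [← hT.card_edgeFinset, Nat.lt_succ_iff]
  exact card_le_card (SimpleGraph.edgeFinset_mono hGT)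

-- Components of `G` have diameter at most its total weight, so if all pairs at distance at most
-- `2 ^ m` were joined in `G`, that relation would be transitive; hence there is an edge to add.
theorem exists_isAcyclic_of_forall_not_isTrans (hself : ∀ x, w s(x, x) = 0)
    (htri : ∀ x y z, w s(x, z) ≤ w s(x, y) + w s(y, z)) (m : ℕ)
    (hbad : ∀ j < m, ¬ IsTrans α fun x y => w s(x, y) ≤ 2 ^ j) :
    ∃ (G : SimpleGraph α) (_ : Fintype G.edgeSet),
      G.IsAcyclic ∧ #G.edgeFinset = m ∧ ∑ e ∈ G.edgeFinset, w e ≤ 2 ^ m := by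
  induction m with
  | zero => exact ⟨⊥, inferInstance, SimpleGraph.isAcyclic_bot, by simp, by simp⟩
  | succ m ih =>
    obtain ⟨G, _, hG, hcard, hweight⟩ := ih fun j hj => hbad j (hj.trans m.lt_succ_self)
    obtain ⟨x, y, hxy, hnr⟩ : ∃ x y, w s(x, y) ≤ 2 ^ m ∧ ¬ G.Reachable x y := by
      by_contra! hreach
      exact hbad m m.lt_succ_self ⟨fun x y z hxy hyz =>
        (weight_le_sum_edgeFinset_of_reachable hself htri
          ((hreach x y hxy).trans (hreach y z hyz))).trans hweight⟩
    have hadj : ¬ G.Adj x y := fun h => hnr h.reachable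
    have hne : x ≠ y := by rintro rfl; exact hnr (.refl x)
    have hnew : s(x, y) ∉ G.edgeFinset := by simpa using hadj
    classical
    have hedges : (G ⊔ SimpleGraph.edge x y).edgeFinset = insert s(x, y) G.edgeFinset := by
      ext e
      simp [SimpleGraph.edgeSet_edge_of_ne hne, or_comm]
    refine ⟨G ⊔ SimpleGraph.edge x y, inferInstance, hG.sup_edge_of_not_reachable hnr, ?_, ?_⟩
    · rw [hedges, card_insert_of_notMem hnew, hcard]
    · rw [hedges, sum_insert hnew, pow_succ]
      omega

theorem exists_isTrans_le_two_pow [Fintype α] (hself : ∀ x, w s(x, x) = 0)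
    (htri : ∀ x y z, w s(x, z) ≤ w s(x, y) + w s(y, z)) {m : ℕ}
    (hcard : Fintype.card α ≤ m + 1) :
    ∃ j ≤ m, IsTrans α fun x y => w s(x, y) ≤ 2 ^ j := by
  classical
  cases isEmpty_or_nonempty α
  · exact ⟨0, m.zero_le, ⟨fun x => isEmptyElim x⟩⟩
  by_contra! hbad
  obtain ⟨G, _, hG, hedges, -⟩ := exists_isAcyclic_of_forall_not_isTrans hself htri (m + 1)
    fun j hj => hbad j (Nat.lt_succ_iff.1 hj)
  have := card_edgeFinset_lt_card_of_isAcyclic hG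
  omega

end ScaleSelection

section PosSemidefKernel

theorem posSemidef_of_setoid {ι 𝕜 : Type*} [Finite ι] [RCLike 𝕜] (s : Setoid ι)
    {A : Matrix ι ι 𝕜} (hA : A.IsHermitian) (hzero : ∀ i j, ¬ s i j → A i j = 0)
    (hmul : ∀ i j k, s i j → s j k → A i j * A j k = A i k) : A.PosSemidef := by
  classical
  have := Fintype.ofFinite ι
  let B : Matrix ι (Quotient s) 𝕜 := of fun i q => if ⟦i⟧ = q then A i q.out else 0
  suffices hAB : A = B * Bᴴ from hAB ▸ posSemidef_self_mul_conjTranspose B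
  ext i j
  have hrep (i : ι) : s i (Quotient.out (⟦i⟧ : Quotient s)) := s.symm (Quotient.mk_out i)
  by_cases hij : s i j
  · have hq : (⟦j⟧ : Quotient s) = ⟦i⟧ := Quotient.sound (s.symm hij)
    have hj : s (Quotient.out (⟦i⟧ : Quotient s)) j := s.trans (s.symm (hrep i)) hij
    simp [B, mul_apply, hq, ← hmul i _ j (hrep i) hj, ← hA.apply j]
  · have hq : (⟦j⟧ : Quotient s) ≠ ⟦i⟧ := fun h => hij (s.symm (Quotient.exact h))
    simp [B, mul_apply, hq, hzero i j hij]

theorem posSemidef_sum_smul_mul_mul_conjTranspose {ι m n 𝕜 : Type*} [Fintype ι] [Finite m]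
    [Fintype n] [RCLike 𝕜] {A : Matrix ι ι 𝕜} {Y : Matrix n n 𝕜} (hA : A.PosSemidef)
    (hY : Y.PosSemidef) (E : ι → Matrix m n 𝕜) :
    (∑ i, ∑ j, A i j • (E i * Y * (E j)ᴴ)).PosSemidef := by
  let F : Matrix m (ι × n) 𝕜 := of fun a p => E p.1 a p.2
  convert (hA.kronecker hY).mul_mul_conjTranspose_same F
  ext a b
  simp only [F, Matrix.sum_apply, Matrix.smul_apply, mul_apply, conjTranspose_apply, of_apply,
    kroneckerMap_apply, Fintype.sum_prod_type, smul_eq_mul, Finset.mul_sum, Finset.sum_mul]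
  rw [sum_comm]
  refine sum_congr rfl fun j _ => ?_
  rw [sum_comm]
  refine sum_congr rfl fun y _ => sum_congr rfl fun i _ => sum_congr rfl fun x _ => ?_
  ring

end PosSemidefKernel

section CharacterExpansion

variable {N : ℕ} [NeZero N] {M : Type*} [AddCommGroup M] [Module ℂ M]

/-- The coefficient of the character `g ↦ ZMod.stdAddChar (k * g)` in the Fourier expansion of `F`.
Mathlib's `ZMod.dft` carries no factor `N⁻¹`, so it is inserted here. -/
noncomputable def charCoeff (F : ZMod N → M) (k : ZMod N) : M :=
  (N : ℂ)⁻¹ • ZMod.dft F k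

theorem sum_stdAddChar_smul_charCoeff (F : ZMod N → M) (g : ZMod N) :
    ∑ k, ZMod.stdAddChar (k * g) • charCoeff F k = F g := by
  simp only [charCoeff, smul_comm _ (N : ℂ)⁻¹, ← smul_sum, ← ZMod.invDFT_apply,
    LinearEquiv.symm_apply_apply]

theorem sum_stdAddChar_smul_charCoeff_ne_zero (F : ZMod N → M)
    [Fintype {k // charCoeff F k ≠ 0}] (g : ZMod N) :
    ∑ k : {k // charCoeff F k ≠ 0}, ZMod.stdAddChar (k.1 * g) • charCoeff F k = F g := by
  rw [← sum_stdAddChar_smul_charCoeff F g]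
  refine Fintype.sum_of_injective _ Subtype.val_injective _ _ (fun k hk => ?_) fun _ => rfl
  simp_all

theorem stdAddChar_neg (k : ZMod N) :
    (ZMod.stdAddChar (-k) : ℂ) = star (ZMod.stdAddChar k : ℂ) :=
  AddChar.map_neg_eq_conj _ k

theorem ofReal_re_charCoeff {φ : ZMod N → ℂ} (hφ : ∀ k, φ (-k) = star (φ k)) (g : ZMod N) :
    ((charCoeff φ g).re : ℂ) = charCoeff φ g := by
  rw [← Complex.conj_eq_iff_re, starRingEnd_apply, charCoeff, star_smul, ZMod.dft_apply, star_sum,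
    ← Equiv.sum_comp (Equiv.neg (ZMod N))]
  simp [← stdAddChar_neg, ← hφ]

theorem sum_re_charCoeff (φ : ZMod N → ℂ) : ∑ g, (charCoeff φ g).re = (φ 0).re := by
  simpa using congrArg Complex.re (sum_stdAddChar_smul_charCoeff φ 0)

theorem mul_charCoeff {n : Type*} [Fintype n] {ρ : ZMod N → Matrix n n ℂ}
    (hρ : ∀ g g', ρ (g + g') = ρ g * ρ g') (g k : ZMod N) :
    ρ g * charCoeff ρ k = ZMod.stdAddChar (g * k) • charCoeff ρ k := by
  rw [charCoeff, Matrix.mul_smul, smul_comm]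
  congr 1
  rw [ZMod.dft_apply, Matrix.mul_sum, smul_sum, ← Equiv.sum_comp (Equiv.addLeft g) fun j =>
    ZMod.stdAddChar (g * k) • ZMod.stdAddChar (-(j * k)) • ρ j]
  refine sum_congr rfl fun j _ => ?_
  rw [Equiv.coe_addLeft, hρ, smul_smul, ← AddChar.map_add_eq_mul, Matrix.mul_smul]
  congr 2
  ring

theorem card_charCoeff_ne_zero_le {n : Type*} [Fintype n] {ρ : ZMod N → Matrix n n ℂ}
    [Fintype {k // charCoeff ρ k ≠ 0}] (hρ : ∀ g g', ρ (g + g') = ρ g * ρ g') :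
    Fintype.card {k // charCoeff ρ k ≠ 0} ≤ Fintype.card n := by
  classical
  have hv (k : {k // charCoeff ρ k ≠ 0}) : ∃ v, charCoeff ρ k *ᵥ v ≠ 0 := by
    by_contra! h
    exact k.2 (Matrix.ext_of_mulVec_single fun i => by rw [h, zero_mulVec])
  choose v hv using hv
  have heigen (k : {k // charCoeff ρ k ≠ 0}) :
      Module.End.HasEigenvector (ρ 1).mulVecLin (ZMod.stdAddChar k.1) (charCoeff ρ k *ᵥ v k) := by
    refine ⟨Module.End.mem_eigenspace_iff.2 ?_, hv k⟩
    rw [mulVecLin_apply, mulVec_mulVec, mul_charCoeff hρ, one_mul, smul_mulVec]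
  have hindep := Module.End.eigenvectors_linearIndependent' _ _
    (ZMod.injective_stdAddChar.comp Subtype.val_injective) _ heigen
  simpa using hindep.fintype_card_le_finrank

/-- The combination of the points `X g` with the weights `charCoeff φ g`, which may be negative.
Taking real parts makes it a real combination; it changes nothing for the `φ` of interest, by
`ofReal_re_charCoeff`. -/
noncomputable def charAverage {V : Type*} [AddCommGroup V] [Module ℝ V] (φ : ZMod N → ℂ)
    (X : ZMod N → V) : V :=
  ∑ g, (charCoeff φ g).re • X g

theorem charAverage_mem {V : Type*} [AddCommGroup V] [Module ℝ V] {φ : ZMod N → ℂ}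
    (hφ : φ 0 = 1) {L : AffineSubspace ℝ V} {X : ZMod N → V} (hX : ∀ g, X g ∈ L) :
    charAverage φ X ∈ L := by
  have hsum : ∑ g, (charCoeff φ g).re = 1 := by rw [sum_re_charCoeff, hφ, Complex.one_re]
  rw [charAverage, ← affineCombination_eq_linear_combination _ _ _ hsum]
  exact affineSpan_le.2 (Set.range_subset_iff.2 hX) (affineCombination_mem_affineSpan hsum X)

theorem map_charAverage {V : Type*} [AddCommGroup V] [Module ℝ V] {φ : ZMod N → ℂ}
    (hφ : ∀ k, φ (-k) = star (φ k)) (f : V →ₗ[ℝ] ℂ) {X : ZMod N → V} {k : ZMod N} {z : ℂ}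
    (hX : ∀ g, f (X g) = ZMod.stdAddChar (k * g) * z) : f (charAverage φ X) = φ k * z := by
  simp only [charAverage, map_sum, map_smul, hX, Complex.real_smul, ofReal_re_charCoeff hφ]
  rw [← sum_stdAddChar_smul_charCoeff φ k, sum_mul]
  exact sum_congr rfl fun g _ => by rw [smul_eq_mul, mul_comm k]; ring

theorem charAverage_mul_mul_conjTranspose {ι m n : Type*} [Fintype ι] [Fintype n]
    {φ : ZMod N → ℂ} (hφ : ∀ k, φ (-k) = star (φ k)) {P : ZMod N → Matrix m n ℂ}
    {κ : ι → ZMod N} {E : ι → Matrix m n ℂ}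
    (hP : ∀ g, ∑ i, ZMod.stdAddChar (κ i * g) • E i = P g) (Y : Matrix n n ℂ) :
    charAverage φ (fun g => P g * Y * (P g)ᴴ) =
      ∑ i, ∑ j, φ (κ i - κ j) • (E i * Y * (E j)ᴴ) := by
  have hexpand (g : ZMod N) : (charCoeff φ g).re • (P g * Y * (P g)ᴴ) =
      ∑ i, ∑ j, (ZMod.stdAddChar (g * (κ i - κ j)) • charCoeff φ g) • (E i * Y * (E j)ᴴ) := by
    rw [← hP, ← Complex.coe_smul, ofReal_re_charCoeff hφ]
    simp only [conjTranspose_sum, conjTranspose_smul, Matrix.sum_mul, Matrix.mul_sum,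
      Matrix.smul_mul, Matrix.mul_smul, smul_smul, smul_sum, ← stdAddChar_neg]
    rw [sum_comm]
    refine sum_congr rfl fun i _ => sum_congr rfl fun j _ => ?_
    rw [mul_sub, sub_eq_add_neg, AddChar.map_add_eq_mul, mul_comm g, mul_comm g]
    congr 1
    simp only [smul_eq_mul]
    ring
  simp only [charAverage, hexpand, ← sum_stdAddChar_smul_charCoeff φ (_ - _), sum_smul]
  rw [sum_comm]
  exact sum_congr rfl fun i _ => sum_comm

end CharacterExpansion

section TruncatedCharacter

theorem valMinAbs_add_of_lt {N : ℕ} {a b : ZMod N}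
    (h : a.valMinAbs.natAbs + b.valMinAbs.natAbs + (a + b).valMinAbs.natAbs < N) :
    (a + b).valMinAbs = a.valMinAbs + b.valMinAbs := by
  rw [← sub_eq_zero]
  refine Int.eq_zero_of_abs_lt_dvd (m := N) ?_ (by rw [abs_lt]; omega)
  rw [← ZMod.intCast_zmod_eq_zero_iff_dvd]
  simp

/-- The function on `ℤ/Nℤ` that agrees with the character `m ↦ exp (iθm)` of `ℤ` on the integers
`|m| ≤ r`, read through the representative of least absolute value, and vanishes elsewhere. -/
noncomputable def truncChar {N : ℕ} (θ : ℝ) (r : ℕ) (k : ZMod N) : ℂ :=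
  if k.valMinAbs.natAbs ≤ r then Complex.exp ((θ * k.valMinAbs : ℝ) * Complex.I) else 0

variable {N r : ℕ} (θ : ℝ)

theorem truncChar_zero : truncChar θ r (0 : ZMod N) = 1 := by
  simp [truncChar]

theorem truncChar_one (hr : 1 ≤ r) (hN : 2 * r < N) :
    truncChar θ r (1 : ZMod N) = Complex.exp (θ * Complex.I) := by
  have hone : (1 : ZMod N).valMinAbs = 1 := by
    simpa using ZMod.valMinAbs_natCast_of_le_half (n := N) (a := 1) (by omega)
  simp [truncChar, hone, hr]

theorem truncChar_neg (hN : 2 * r < N) (k : ZMod N) :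
    truncChar θ r (-k) = star (truncChar θ r k) := by
  simp only [truncChar, ZMod.natAbs_valMinAbs_neg]
  split_ifs with hk
  · have hneg : (-k).valMinAbs = -k.valMinAbs := by
      have hadd := valMinAbs_add_of_lt (a := k) (b := -k) (by simp; omega)
      rw [add_neg_cancel, ZMod.valMinAbs_zero] at hadd
      omega
    rw [hneg, Complex.star_def, ← Complex.exp_conj]
    simp
  · simp

theorem truncChar_mul_truncChar (hN : 3 * r < N) {a b : ZMod N} (ha : a.valMinAbs.natAbs ≤ r)
    (hb : b.valMinAbs.natAbs ≤ r) (hab : (a + b).valMinAbs.natAbs ≤ r) :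
    truncChar θ r a * truncChar θ r b = truncChar θ r (a + b) := by
  rw [truncChar, truncChar, truncChar, if_pos ha, if_pos hb, if_pos hab,
    valMinAbs_add_of_lt (by omega), ← Complex.exp_add]
  push_cast
  ring_nf

variable {ι : Type*} (κ : ι → ZMod N)

theorem natAbs_valMinAbs_sub_comm (a b : ZMod N) :
    (a - b).valMinAbs.natAbs = (b - a).valMinAbs.natAbs := by
  rw [← ZMod.natAbs_valMinAbs_neg, neg_sub]

theorem natAbs_valMinAbs_sub_le (a b c : ZMod N) :
    (a - c).valMinAbs.natAbs ≤ (a - b).valMinAbs.natAbs + (b - c).valMinAbs.natAbs := by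
  have h := ZMod.natAbs_valMinAbs_add_le (a - b) (b - c)
  rw [sub_add_sub_cancel] at h
  exact h.trans (Int.natAbs_add_le _ _)

theorem exists_isTrans_natAbs_valMinAbs_sub_le [Fintype ι] {m : ℕ}
    (hcard : Fintype.card ι ≤ m + 1) :
    ∃ j ≤ m, IsTrans ι fun i i' => (κ i - κ i').valMinAbs.natAbs ≤ 2 ^ j :=
  exists_isTrans_le_two_pow
    (w := Sym2.lift ⟨fun i i' => (κ i - κ i').valMinAbs.natAbs,
      fun _ _ => natAbs_valMinAbs_sub_comm _ _⟩)
    (by simp) (fun _ _ _ => natAbs_valMinAbs_sub_le _ _ _) hcard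

theorem posSemidef_truncChar_sub [Finite ι] (hN : 3 * r < N)
    (htrans : IsTrans ι fun i j => (κ i - κ j).valMinAbs.natAbs ≤ r) :
    (of fun i j => truncChar θ r (κ i - κ j)).PosSemidef := by
  let s : Setoid ι :=
    { r := fun i j => (κ i - κ j).valMinAbs.natAbs ≤ r
      iseqv :=
        { refl := by simp
          symm := fun h => (natAbs_valMinAbs_sub_comm _ _).trans_le h
          trans := fun hij hjk => htrans.trans _ _ _ hij hjk } }
  refine posSemidef_of_setoid s ?_ (fun i j hij => if_neg hij) fun i j k hij hjk => ?_
  · ext i j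
    rw [conjTranspose_apply, of_apply, of_apply, ← truncChar_neg θ (by omega), neg_sub]
  · have hik : (κ i - κ j + (κ j - κ k)).valMinAbs.natAbs ≤ r := by
      rw [sub_add_sub_cancel]
      exact s.trans hij hjk
    simpa using truncChar_mul_truncChar θ hN hij hjk hik

end TruncatedCharacter

theorem exists_posSemidef_charAverage_truncChar {N : ℕ} [NeZero N] {n : Type*} [Fintype n]
    [Nonempty n] {ρ : ZMod N → Matrix n n ℂ} (hρ : ∀ g g', ρ (g + g') = ρ g * ρ g')
    (hN : 3 * 2 ^ Fintype.card n < 2 * N) :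
    ∃ r, 1 ≤ r ∧ 3 * r < N ∧ ∀ (θ : ℝ) (Y : Matrix n n ℂ), Y.PosSemidef →
      (charAverage (truncChar θ r) fun g => ρ g * Y * (ρ g)ᴴ).PosSemidef := by
  classical
  obtain ⟨m, hm⟩ := Nat.exists_eq_add_one.2 (Fintype.card_pos (α := n))
  obtain ⟨j, hjm, htrans⟩ := exists_isTrans_natAbs_valMinAbs_sub_le
    (Subtype.val : {k // charCoeff ρ k ≠ 0} → ZMod N) (hm ▸ card_charCoeff_ne_zero_le hρ)
  have hjN : 3 * 2 ^ j < N := by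
    have : 2 ^ j ≤ 2 ^ m := Nat.pow_le_pow_right two_pos hjm
    rw [hm, pow_succ] at hN
    omega
  refine ⟨2 ^ j, Nat.one_le_two_pow, hjN, fun θ Y hY => ?_⟩
  rw [charAverage_mul_mul_conjTranspose (truncChar_neg θ (by omega))
    (sum_stdAddChar_smul_charCoeff_ne_zero ρ)]
  exact posSemidef_sum_smul_mul_mul_conjTranspose (posSemidef_truncChar_sub θ _ hjN htrans) hY _

section Plane

/-- The vertices of the regular `N`-gon, numbered from `1` and with the first one at angle
`π / N`. -/
def polygonVertices (N : ℕ) : Set (ℝ × ℝ) :=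
  {p : ℝ × ℝ | ∃ i ∈ Finset.Icc (1:ℕ) N,
    p = (Real.cos ((2 * (i : ℝ) - 1) * π / N), Real.sin ((2 * (i : ℝ) - 1) * π / N))}

/-- The counterclockwise rotation of `ℝ × ℝ` about the origin by the angle `θ`. -/
noncomputable def planeRotation (θ : ℝ) (p : ℝ × ℝ) : ℝ × ℝ :=
  (Real.cos θ * p.1 - Real.sin θ * p.2, Real.sin θ * p.1 + Real.cos θ * p.2)

theorem planeRotation_cos_sin (θ ψ : ℝ) :
    planeRotation θ (Real.cos ψ, Real.sin ψ) = (Real.cos (θ + ψ), Real.sin (θ + ψ)) := by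
  rw [planeRotation, Real.cos_add, Real.sin_add]

theorem equivRealProdLm_exp_mul_I_mul (θ : ℝ) (z : ℂ) :
    Complex.equivRealProdLm (Complex.exp (θ * Complex.I) * z) =
      planeRotation θ (Complex.equivRealProdLm z) := by
  ext <;> simp [Complex.equivRealProdLm, planeRotation, Complex.exp_ofReal_mul_I_re,
    Complex.exp_ofReal_mul_I_im]
  ring

theorem stdAddChar_eq_exp_mul_I {N : ℕ} [NeZero N] (g : ZMod N) :
    (ZMod.stdAddChar g : ℂ) = Complex.exp ((2 * π * g.val / N : ℝ) * Complex.I) := by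
  have h := ZMod.stdAddChar_coe (N := N) g.val
  rw [Int.cast_natCast, ZMod.natCast_zmod_val] at h
  rw [h]
  push_cast
  ring_nf

theorem map_charAverage_of_map_eq_planeRotation {N : ℕ} [NeZero N] {V : Type*} [AddCommGroup V]
    [Module ℝ V] {φ : ZMod N → ℂ} (hφ : ∀ k, φ (-k) = star (φ k)) {θ : ℝ}
    (hφ₁ : φ 1 = Complex.exp (θ * Complex.I)) (f : V →ₗ[ℝ] ℝ × ℝ) {X : ZMod N → V} {p : ℝ × ℝ}
    (hX : ∀ g, f (X g) = planeRotation (2 * π * g.val / N) p) :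
    f (charAverage φ X) = planeRotation θ p := by
  let e := Complex.equivRealProdLm
  have hrot : (e.symm ∘ₗ f) (charAverage φ X) = φ 1 * e.symm p := by
    refine map_charAverage hφ (e.symm.toLinearMap ∘ₗ f) fun g => e.injective ?_
    rw [one_mul, stdAddChar_eq_exp_mul_I, equivRealProdLm_exp_mul_I_mul]
    simp [e, hX]
  rw [e.symm_apply_eq.1 hrot, hφ₁, equivRealProdLm_exp_mul_I_mul, LinearEquiv.apply_symm_apply]

theorem exists_cos_sub_eq_one_of_mem_convexHull {S : Set ℝ} {θ : ℝ}
    (h : (Real.cos θ, Real.sin θ) ∈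
      convexHull ℝ ((fun ψ => (Real.cos ψ, Real.sin ψ)) '' S)) :
    ∃ ψ ∈ S, Real.cos (θ - ψ) = 1 := by
  by_contra! hS
  let f : ℝ × ℝ →ₗ[ℝ] ℝ :=
    Real.cos θ • LinearMap.fst ℝ ℝ ℝ + Real.sin θ • LinearMap.snd ℝ ℝ ℝ
  have hf (ψ : ℝ) : f (Real.cos ψ, Real.sin ψ) = Real.cos (θ - ψ) := by
    simp [f, Real.cos_sub]
  have hsub : convexHull ℝ ((fun ψ => (Real.cos ψ, Real.sin ψ)) '' S) ⊆ {p | f p < 1} := by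
    refine convexHull_min ?_ (convex_halfSpace_lt f.isLinear 1)
    rintro _ ⟨ψ, hψ, rfl⟩
    exact (hf ψ).trans_lt ((Real.cos_le_one _).lt_of_ne (hS ψ hψ))
  have hlt : f (Real.cos θ, Real.sin θ) < 1 := hsub h
  simp [hf] at hlt

theorem cos_sin_two_pi_div_notMem_convexHull_polygonVertices {N : ℕ} [NeZero N] :
    (Real.cos (2 * π / N), Real.sin (2 * π / N)) ∉ convexHull ℝ (polygonVertices N) := by
  have himage : polygonVertices N = (fun ψ => (Real.cos ψ, Real.sin ψ)) ''
      ((fun i : ℕ => (2 * (i : ℝ) - 1) * π / N) '' Set.Icc 1 N) := by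
    ext p
    simp [polygonVertices, eq_comm]
  rw [himage]
  intro hmem
  obtain ⟨_, ⟨i, -, rfl⟩, hcos⟩ := exists_cos_sub_eq_one_of_mem_convexHull hmem
  obtain ⟨m, hm⟩ := (Real.cos_eq_one_iff _).1 hcos
  have hN : (N : ℝ) ≠ 0 := NeZero.ne _
  field_simp at hm
  have hodd : 2 * (m * N) = 3 - 2 * (i : ℤ) := by
    have : 2 * (m * N) = 3 - 2 * (i : ℝ) := by linarith
    exact_mod_cast this
  omega

end Plane

theorem log_div_two_le_of_two_mul_le {N d : ℕ} (hN : 0 < N) (h : 2 * N ≤ 3 * 2 ^ d) :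
    Real.log (N / 2) ≤ d := by
  have h' : (2 * N : ℝ) ≤ 3 * 2 ^ d := by exact_mod_cast h
  have hpow : (2 : ℝ) ^ d ≤ Real.exp d := by
    rw [← Real.exp_one_pow]
    gcongr
    linarith [Real.add_one_le_exp 1]
  rw [Real.log_le_iff_le_exp (by positivity)]
  linarith [pow_pos (two_pos (α := ℝ)) d]

theorem equivariant_psd_lift_lb_general {N : ℕ} [NeZero N] {n : Type*} [Fintype n] [Nonempty n]
    (L : AffineSubspace ℝ (Matrix n n ℂ)) (f : Matrix n n ℂ →ₗ[ℝ] ℝ × ℝ)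
    (ρ : ZMod N → Matrix n n ℂ) (hρ : ∀ g g', ρ (g + g') = ρ g * ρ g')
    (hlift : convexHull ℝ (polygonVertices N) = f '' {Y | Y ∈ L ∧ Y.PosSemidef})
    (hinv : ∀ g, ∀ Y ∈ L, Y.PosSemidef → ρ g * Y * (ρ g)ᴴ ∈ L)
    (hequiv : ∀ g, ∀ Y ∈ L, Y.PosSemidef →
      f (ρ g * Y * (ρ g)ᴴ) = planeRotation (2 * π * g.val / N) (f Y)) :
    2 * N ≤ 3 * 2 ^ Fintype.card n := by
  by_contra! hlt
  obtain ⟨r, hr, hrN, hpsd⟩ := exists_posSemidef_charAverage_truncChar hρ hlt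
  obtain ⟨Y, ⟨hYL, hY⟩, hfY⟩ : (Real.cos (π / N), Real.sin (π / N)) ∈
      f '' {Y | Y ∈ L ∧ Y.PosSemidef} :=
    hlift ▸ subset_convexHull ℝ _ ⟨1, by simp; omega, by norm_num⟩
  have hfZ : f (charAverage (truncChar (π / N) r) fun g => ρ g * Y * (ρ g)ᴴ) =
      (Real.cos (2 * π / N), Real.sin (2 * π / N)) := by
    rw [map_charAverage_of_map_eq_planeRotation (truncChar_neg _ (by omega))
      (truncChar_one _ hr (by omega)) f fun g => hequiv g Y hYL hY, hfY, planeRotation_cos_sin]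
    ring_nf
  refine cos_sin_two_pi_div_notMem_convexHull_polygonVertices (N := N) ?_
  rw [hlift, ← hfZ]
  exact ⟨_, ⟨charAverage_mem (truncChar_zero _) fun g => hinv g Y hYL hY, hpsd _ Y hY⟩, rfl⟩

/-- Any Hermitian psd lift of the regular `N`-gon that is equivariant with respect to
the rotation group `Rot_N ≅ ℤ/Nℤ` has size at least `ln(N/2)`. -/
theorem equivariant_psd_lift_lb (N d : ℕ) (hN : 3 ≤ N) (hd : 1 ≤ d)
    (L : AffineSubspace ℝ (Matrix (Fin d) (Fin d) ℂ))
    (hHerm : ∀ Y ∈ L, Y.IsHermitian)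
    (π' : Matrix (Fin d) (Fin d) ℂ →ₗ[ℝ] ℝ × ℝ)
    (ρ : ZMod N → Matrix.GeneralLinearGroup (Fin d) ℂ)
    (hρ : ∀ g g' : ZMod N, ρ (g + g') = ρ g * ρ g')
    (hlift : convexHull ℝ
        {p : ℝ × ℝ | ∃ i ∈ Finset.Icc (1:ℕ) N,
          p = (Real.cos ((2 * (i : ℝ) - 1) * π / N),
               Real.sin ((2 * (i : ℝ) - 1) * π / N))} =
      π' '' {Y | Y ∈ L ∧ Y.PosSemidef})
    (hinv : ∀ g : ZMod N, ∀ Y ∈ L,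
      (ρ g : Matrix (Fin d) (Fin d) ℂ) * Y * (ρ g : Matrix (Fin d) (Fin d) ℂ)ᴴ ∈ L)
    (hequiv : ∀ g : ZMod N, ∀ Y ∈ L, Y.PosSemidef →
      π' ((ρ g : Matrix (Fin d) (Fin d) ℂ) * Y * (ρ g : Matrix (Fin d) (Fin d) ℂ)ᴴ) =
        (Real.cos (2 * π * (g.val : ℝ) / N) * (π' Y).1 -
            Real.sin (2 * π * (g.val : ℝ) / N) * (π' Y).2,
         Real.sin (2 * π * (g.val : ℝ) / N) * (π' Y).1 +
            Real.cos (2 * π * (g.val : ℝ) / N) * (π' Y).2)) :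
    Real.log (N / 2) ≤ (d : ℝ) := by
  have : NeZero N := ⟨by omega⟩
  have : Nonempty (Fin d) := ⟨⟨0, hd⟩⟩
  have hbound := equivariant_psd_lift_lb_general L π' (fun g => (ρ g).val)
    (fun g g' => by rw [hρ, Units.val_mul]) hlift (fun g Y hY _ => hinv g Y hY) hequiv
  exact log_div_two_le_of_two_mul_le (by omega) (by simpa using hbound)
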